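/- arXiv:1901.05645 — 2 statements merged into one kernel-verified Lean document; each statement's English description precedes it below -/
import Mathlib

section
/- Let u_R and L ≥ 0 be as follows: u_R : ℝ × [0,1] → ℝ twice continuously differentiable with ∂²u_R/∂d² ≤ −κ < 0 and ∂²u_R/∂d∂m > 0 everywhere, ρ_R(m) its maximizer in d, w_R(d,m) = u_R(ρ_R(m),m) − u_R(d,m), and D(m) = {d : w_R(d,m) ≤ L}, a nonempty compact interval. Let u : ℝ × [0,1] → ℝ be twice continuously differentiable with ∂²u/∂d²(d,m) < 0 and ∂²u/∂d∂m(d,m) > 0 for all d, m. Then for each m ∈ [0,1] the constrained maximizer ρ_*(m) = argmax_{d ∈ D(m)} u(d,m) exists, is unique, and the function m ↦ ρ_*(m) is nondecreasing on [0,1]. -/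
open Set

noncomputable section

/-!
Since `∂u_R/∂d` increases with `m`, so does every difference `u_R(d', m) - u_R(d, m)` with
`d ≤ d'`; together with the convexity of `D(m)` this makes `D(m)` increase with `m` in the strong
set order. The objective `u` has increasing differences as well, so the maximizer is monotone by
Topkis's argument: if `m₁ ≤ m₂` but the maximizer `x` at `m₁` exceeded the maximizer `y` at `m₂`,
both points would be feasible for both parameters, and
`u(x, m₁) - u(y, m₁) ≤ u(x, m₂) - u(y, m₂) ≤ 0` would make `y` a second maximizer at `m₁`.
Existence rests on the fact that a concave function with a strict maximum decreases at least
linearly away from it, so that `D(m)` is compact.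
-/

/-- Veinott's strong set order. On a linear order, requiring the meet of `a ∈ A` and `b ∈ B` to lie
in `A` and their join to lie in `B` is a condition only when `b ≤ a`, which is how it is encoded. -/
def StrongSetLE {X : Type*} [LE X] (A B : Set X) : Prop :=
  ∀ ⦃a⦄, a ∈ A → ∀ ⦃b⦄, b ∈ B → b ≤ a → b ∈ A ∧ a ∈ B

/-- Increasing differences of a parametrized function, the complementarity condition of monotone
comparative statics: the gain from raising the decision is monotone in the parameter on `s`. -/
def IncreasingDifferencesOn {X M : Type*} [LE X] [Preorder M] (f : X → M → ℝ) (s : Set M) :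
    Prop :=
  ∀ ⦃x y⦄, x ≤ y → MonotoneOn (fun m => f y m - f x m) s

/-- The points whose loss relative to the reference point `r` is at most `L`. The enforceable set
`D(m)` is `regretSet (u_R(·, m)) (ρ_R(m)) L`. -/
def regretSet {X : Type*} (f : X → ℝ) (r : X) (L : ℝ) : Set X :=
  {x | f r - f x ≤ L}

section RegretSet

variable {X : Type*} {f : X → ℝ} {r x : X} {L : ℝ}

@[simp]
theorem mem_regretSet : x ∈ regretSet f r L ↔ f r - f x ≤ L :=
  Iff.rfl

theorem self_mem_regretSet (hL : 0 ≤ L) : r ∈ regretSet f r L := by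
  simpa using hL

theorem convex_regretSet {E : Type*} [AddCommMonoid E] [Module ℝ E] {f : E → ℝ} {r : E}
    (hf : ConcaveOn ℝ univ f) : Convex ℝ (regretSet f r L) := by
  simpa [regretSet, add_comm] using hf.convex_ge (f r - L)

end RegretSet

section Coercivity

variable {E : Type*} [NormedAddCommGroup E] [NormedSpace ℝ E] {f : E → ℝ} {r x : E} {c L : ℝ}

theorem mul_norm_sub_le_of_forall_sphere (hf : ConcaveOn ℝ univ f)
    (hc : ∀ z ∈ Metric.sphere r 1, c ≤ f r - f z) (hx : 1 ≤ ‖x - r‖) :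
    c * ‖x - r‖ ≤ f r - f x := by
  set t := ‖x - r‖⁻¹
  have hnorm : 0 < ‖x - r‖ := one_pos.trans_le hx
  have hconc : (1 - t) * f r + t * f x ≤ f (AffineMap.lineMap r x t) := by
    simpa [AffineMap.lineMap_apply_module] using
      hf.2 (mem_univ r) (mem_univ x) (sub_nonneg.2 (inv_le_one_of_one_le₀ hx))
        (inv_nonneg.2 hnorm.le) (sub_add_cancel 1 t)
  have hsphere : AffineMap.lineMap r x t ∈ Metric.sphere r 1 := by
    rw [Metric.mem_sphere, dist_lineMap_left, norm_inv, norm_norm, dist_eq_norm, norm_sub_rev r x,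
      inv_mul_cancel₀ hnorm.ne']
  have hct : c ≤ (f r - f x) / ‖x - r‖ := by
    rw [div_eq_inv_mul]
    linarith [hc _ hsphere]
  exact (le_div_iff₀ hnorm).1 hct

theorem isCompact_regretSet [FiniteDimensional ℝ E] (hf : ConcaveOn ℝ univ f)
    (hr : ∀ x ≠ r, f x < f r) : IsCompact (regretSet f r L) := by
  have hcont : Continuous f := hf.locallyLipschitz.continuous
  have : ProperSpace E := FiniteDimensional.proper_real E
  obtain ⟨c, hc, hsphere⟩ : ∃ c, 0 < c ∧ ∀ z ∈ Metric.sphere r 1, c ≤ f r - f z :=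
    (isCompact_sphere r 1).exists_forall_le' (continuous_const.sub hcont).continuousOn
      fun z hz => sub_pos.2 (hr z (Metric.ne_of_mem_sphere hz one_ne_zero))
  refine (isCompact_closedBall r (max 1 (L / c))).of_isClosed_subset
    (isClosed_le (continuous_const.sub hcont) continuous_const) fun x hx => ?_
  rw [mem_closedBall_iff_norm, le_max_iff, or_iff_not_imp_left, not_le]
  intro hfar
  rw [le_div_iff₀' hc]
  exact (mul_norm_sub_le_of_forall_sphere hf hsphere hfar.le).trans hx

end Coercivity

theorem exists_unique_isMaxOn_of_strictConcaveOn {E : Type*} [TopologicalSpace E]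
    [AddCommMonoid E] [Module ℝ E] {S : Set E} {f : E → ℝ} (hS : IsCompact S)
    (hne : S.Nonempty) (hcont : ContinuousOn f S) (hf : StrictConcaveOn ℝ S f) :
    ∃ x ∈ S, IsMaxOn f S x ∧ ∀ y ∈ S, IsMaxOn f S y → y = x := by
  obtain ⟨x, hxS, hx⟩ := hS.exists_isMaxOn hne hcont
  exact ⟨x, hxS, hx, fun y hyS hy => hf.eq_of_isMaxOn hy hx hyS hxS⟩

section Monotonicity

variable {X M : Type*} [LinearOrder X] [Preorder M] {s : Set M}

theorem strongSetLE_regretSet {f : X → M → ℝ} {r : M → X} {L : ℝ}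
    (hf : IncreasingDifferencesOn f s) (hL : 0 ≤ L)
    (hr : ∀ m ∈ s, IsMaxOn (f · m) univ (r m))
    (hD : ∀ m ∈ s, (regretSet (f · m) (r m) L).OrdConnected)
    {m₁ m₂ : M} (h₁ : m₁ ∈ s) (h₂ : m₂ ∈ s) (hm : m₁ ≤ m₂) :
    StrongSetLE (regretSet (f · m₁) (r m₁) L) (regretSet (f · m₂) (r m₂) L) := by
  intro a ha b hb hba
  constructor
  · rcases le_total (r m₁) b with hrb | hbr
    · exact (hD m₁ h₁).out (self_mem_regretSet hL) ha ⟨hrb, hba⟩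
    · calc
        f (r m₁) m₁ - f b m₁ ≤ f (r m₁) m₂ - f b m₂ := hf hbr h₁ h₂ hm
        _ ≤ f (r m₂) m₂ - f b m₂ := sub_le_sub_right (hr m₂ h₂ (mem_univ _)) _
        _ ≤ L := hb
  · rcases le_total a (r m₂) with har | hra
    · exact (hD m₂ h₂).out hb (self_mem_regretSet hL) ⟨hba, har⟩
    · have hdiff : f a m₁ - f (r m₂) m₁ ≤ f a m₂ - f (r m₂) m₂ := hf hra h₁ h₂ hm
      calc
        f (r m₂) m₂ - f a m₂ ≤ f (r m₂) m₁ - f a m₁ := by linarith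
        _ ≤ f (r m₁) m₁ - f a m₁ := sub_le_sub_right (hr m₁ h₁ (mem_univ _)) _
        _ ≤ L := ha

theorem IncreasingDifferencesOn.monotoneOn_of_unique_isMaxOn {f : X → M → ℝ} {D : M → Set X}
    {ρ : M → X} (hf : IncreasingDifferencesOn f s)
    (hD : ∀ m₁ ∈ s, ∀ m₂ ∈ s, m₁ ≤ m₂ → StrongSetLE (D m₁) (D m₂))
    (hmem : ∀ m ∈ s, ρ m ∈ D m) (hmax : ∀ m ∈ s, IsMaxOn (f · m) (D m) (ρ m))
    (huniq : ∀ m ∈ s, ∀ x ∈ D m, IsMaxOn (f · m) (D m) x → x = ρ m) :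
    MonotoneOn ρ s := by
  intro m₁ h₁ m₂ h₂ hm
  by_contra! hlt
  obtain ⟨hmem₁, hmem₂⟩ := hD m₁ h₁ m₂ h₂ hm (hmem m₁ h₁) (hmem m₂ h₂) hlt.le
  have hdiff : f (ρ m₁) m₁ - f (ρ m₂) m₁ ≤ f (ρ m₁) m₂ - f (ρ m₂) m₂ := hf hlt.le h₁ h₂ hm
  have hopt₂ : f (ρ m₁) m₂ ≤ f (ρ m₂) m₂ := hmax m₂ h₂ hmem₂
  have hle₁ : f (ρ m₁) m₁ ≤ f (ρ m₂) m₁ := by linarith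
  have hopt₁ : IsMaxOn (f · m₁) (D m₁) (ρ m₂) := fun x hx => (hmax m₁ h₁ hx).trans hle₁
  exact hlt.ne (huniq m₁ h₁ _ hmem₁ hopt₁)

end Monotonicity

theorem IncreasingDifferencesOn.of_monotoneOn_deriv {M : Type*} [Preorder M] {s : Set M}
    {f : ℝ → M → ℝ} (hf : ∀ m ∈ s, Differentiable ℝ (f · m))
    (hderiv : ∀ x, MonotoneOn (fun m => deriv (f · m) x) s) : IncreasingDifferencesOn f s := by
  intro x y hxy m₁ h₁ m₂ h₂ hm
  have hmono : Monotone fun x => f x m₂ - f x m₁ :=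
    monotone_of_deriv_nonneg ((hf m₂ h₂).sub (hf m₁ h₁)) fun x => by
      rw [deriv_fun_sub (hf m₂ h₂ x) (hf m₁ h₁ x)]
      exact sub_nonneg.2 (hderiv x h₁ h₂ hm)
  linarith [hmono hxy]

theorem IncreasingDifferencesOn.of_deriv_deriv_pos {s : Set ℝ} (hs : Convex ℝ s)
    {f : ℝ → ℝ → ℝ} (hf : ∀ m ∈ s, Differentiable ℝ (f · m))
    (hcross : ∀ x, ∀ m ∈ s, 0 < deriv (fun m' => deriv (f · m') x) m) :
    IncreasingDifferencesOn f s :=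
  .of_monotoneOn_deriv hf fun x =>
    (strictMonoOn_of_deriv_pos hs
      -- A nonzero `deriv` certifies differentiability, hence continuity.
      (fun m hm => (differentiableAt_of_deriv_ne_zero
        (hcross x m hm).ne').continuousAt.continuousWithinAt)
      fun m hm => hcross x m (interior_subset hm)).monotoneOn

theorem lt_of_deriv_eq_zero_of_deriv_deriv_neg {f : ℝ → ℝ} {r : ℝ} (hf : Continuous f)
    (hconc : ∀ x, deriv (deriv f) x < 0) (hr : deriv f r = 0) {x : ℝ} (hx : x ≠ r) :
    f x < f r := by
  have hstrict : StrictConcaveOn ℝ univ f := strictConcaveOn_univ_of_deriv2_neg hf hconc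
  have hmax : ∀ y, f y ≤ f r := IsMaxOn.of_isLocalMax_of_convex_univ
    (isLocalMax_of_deriv_deriv_neg (hconc r) hr hf.continuousAt) hstrict.concaveOn
  refine (hmax x).lt_of_ne fun heq => hx ?_
  exact hstrict.eq_of_isMaxOn (fun y _ => (hmax y).trans heq.ge) (fun y _ => hmax y)
    (mem_univ x) (mem_univ r)

theorem constrained_maximizer_monotone_general {M : Type*} [Preorder M] {s : Set M}
    {uR u : ℝ → M → ℝ} {ρR : M → ℝ} {L : ℝ} (hL : 0 ≤ L)
    (hconcR : ∀ m ∈ s, ConcaveOn ℝ univ (uR · m))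
    (hρR : ∀ m ∈ s, ∀ d ≠ ρR m, uR d m < uR (ρR m) m)
    (hdiffR : IncreasingDifferencesOn uR s)
    (hconc : ∀ m ∈ s, StrictConcaveOn ℝ univ (u · m))
    (hdiff : IncreasingDifferencesOn u s) :
    ∃ ρ : M → ℝ,
      (∀ m ∈ s, ρ m ∈ regretSet (uR · m) (ρR m) L ∧
        IsMaxOn (u · m) (regretSet (uR · m) (ρR m) L) (ρ m) ∧
        ∀ d ∈ regretSet (uR · m) (ρR m) L,
          IsMaxOn (u · m) (regretSet (uR · m) (ρR m) L) d → d = ρ m) ∧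
      MonotoneOn ρ s := by
  have hconvex (m) (hm : m ∈ s) : Convex ℝ (regretSet (uR · m) (ρR m) L) :=
    convex_regretSet (hconcR m hm)
  have hmaxR (m) (hm : m ∈ s) : IsMaxOn (uR · m) univ (ρR m) := fun d _ =>
    (eq_or_ne d (ρR m)).elim (fun h => (congrArg (uR · m) h).le) fun h => (hρR m hm d h).le
  have hexists (m) (hm : m ∈ s) := exists_unique_isMaxOn_of_strictConcaveOn
    (isCompact_regretSet (L := L) (hconcR m hm) (hρR m hm)) ⟨ρR m, self_mem_regretSet hL⟩
    (hconc m hm).concaveOn.locallyLipschitz.continuous.continuousOn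
    ((hconc m hm).subset (subset_univ _) (hconvex m hm))
  choose! ρ hmem hmax huniq using hexists
  refine ⟨ρ, fun m hm => ⟨hmem m hm, hmax m hm, huniq m hm⟩, ?_⟩
  exact hdiff.monotoneOn_of_unique_isMaxOn
    (fun m₁ h₁ m₂ h₂ => strongSetLE_regretSet hdiffR hL hmaxR
      (fun m hm => (hconvex m hm).ordConnected) h₁ h₂)
    hmem hmax huniq

/-- the constrained maximizer
`ρ_*(m) = argmax_{d ∈ D(m)} u(d,m)` over the enforceable set
`D(m) = {d : w_R(d,m) ≤ L}` exists, is unique, and is nondecreasing in `m`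
on `[0,1]`. -/
theorem constrained_maximizer_monotone (uR : ℝ → ℝ → ℝ)
    (hC2R : ContDiff ℝ 2 (fun p : ℝ × ℝ => uR p.1 p.2))
    (κ : ℝ) (hκ : 0 < κ)
    (hconcR : ∀ d : ℝ, ∀ m ∈ Icc (0:ℝ) 1,
      deriv (fun d' => deriv (fun d'' => uR d'' m) d') d ≤ -κ)
    (hcrossR : ∀ d : ℝ, ∀ m ∈ Icc (0:ℝ) 1,
      0 < deriv (fun m' => deriv (fun d' => uR d' m') d) m)
    (ρR : ℝ → ℝ)
    (hρR : ∀ m ∈ Icc (0:ℝ) 1, deriv (fun d => uR d m) (ρR m) = 0)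
    (L : ℝ) (hL : 0 ≤ L)
    (u : ℝ → ℝ → ℝ)
    (hC2 : ContDiff ℝ 2 (fun p : ℝ × ℝ => u p.1 p.2))
    (hconc : ∀ d : ℝ, ∀ m ∈ Icc (0:ℝ) 1,
      deriv (fun d' => deriv (fun d'' => u d'' m) d') d < 0)
    (hcross : ∀ d : ℝ, ∀ m ∈ Icc (0:ℝ) 1,
      0 < deriv (fun m' => deriv (fun d' => u d' m') d) m) :
    ∃ ρs : ℝ → ℝ,
      (∀ m ∈ Icc (0:ℝ) 1,
        (uR (ρR m) m - uR (ρs m) m ≤ L) ∧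
        (∀ d : ℝ, uR (ρR m) m - uR d m ≤ L → u d m ≤ u (ρs m) m) ∧
        (∀ d : ℝ, uR (ρR m) m - uR d m ≤ L →
          (∀ d' : ℝ, uR (ρR m) m - uR d' m ≤ L → u d' m ≤ u d m) → d = ρs m)) ∧
      MonotoneOn ρs (Icc (0:ℝ) 1) := by
  have hd (m : ℝ) : Differentiable ℝ (u · m) :=
    (hC2.comp₂ contDiff_id contDiff_const).differentiable two_ne_zero
  have hdR (m : ℝ) : Differentiable ℝ (uR · m) :=
    (hC2R.comp₂ contDiff_id contDiff_const).differentiable two_ne_zero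
  have hnegR (m) (hm : m ∈ Icc (0 : ℝ) 1) (d : ℝ) : deriv (deriv (uR · m)) d < 0 :=
    (hconcR d m hm).trans_lt (neg_neg_of_pos hκ)
  exact constrained_maximizer_monotone_general hL
    (fun m hm =>
      (strictConcaveOn_univ_of_deriv2_neg (hdR m).continuous (hnegR m hm)).concaveOn)
    (fun m hm _ => lt_of_deriv_eq_zero_of_deriv_deriv_neg (hdR m).continuous (hnegR m hm)
      (hρR m hm))
    (.of_deriv_deriv_pos (convex_Icc 0 1) (fun m _ => hdR m) hcrossR)
    (fun m hm => strictConcaveOn_univ_of_deriv2_neg (hd m).continuous (hconc · m hm))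
    (.of_deriv_deriv_pos (convex_Icc 0 1) (fun m _ => hd m) hcross)
end
end

section
/- In the quadratic setup with a > 2, let 0 < ℓ̂ ≤ ℓ and let u_*^ℓ and u_*^{ℓ̂} denote the payoff functions obtained from leeways ℓ and ℓ̂ respectively. Let F be any cumulative distribution function on [0,1] with strictly positive density. If complete pooling P = [0,1] is optimal for u_*^ℓ (i.e., ∫_0^1 u_*^ℓ(θ) dG_{[0,1]}(θ) ≥ ∫_0^1 u_*^ℓ(θ) dG_P(θ) for every open pooling set P), then complete pooling P = [0,1] is optimal for u_*^{ℓ̂}. -/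
open MeasureTheory Set
open scoped Classical

noncomputable section

/-- CDF associated with the density `f` (relevant on `[0,1]`): `F(x) = ∫_0^x f`. -/
def cdfF (f : ℝ → ℝ) (x : ℝ) : ℝ := ∫ t in (0:ℝ)..x, f t

/-- Conditional mean `E_F[θ | (ξ,ζ)]` of `θ` on the interval `(ξ, ζ)` under density `f`. -/
def condMean (f : ℝ → ℝ) (ξ ζ : ℝ) : ℝ :=
  (∫ t in ξ..ζ, t * f t) / (∫ t in ξ..ζ, f t)

/-- `f` is a strictly positive density of a probability measure on `[0,1]`. -/
def IsDensity (f : ℝ → ℝ) : Prop :=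
  (∀ θ ∈ Icc (0:ℝ) 1, 0 < f θ) ∧ IntegrableOn f (Icc (0:ℝ) 1) ∧
    (∫ t in (0:ℝ)..1, f t) = 1

/-- An open pooling set: a relatively open subset of `[0,1]`. -/
def IsPoolingSet (P : Set ℝ) : Prop :=
  ∃ U : Set ℝ, IsOpen U ∧ P = U ∩ Icc (0:ℝ) 1

/-- Left endpoint `ξ_i` of the interval component of `θ` in `P`. -/
def compInf (P : Set ℝ) (θ : ℝ) : ℝ := sInf (connectedComponentIn P θ)

/-- Right endpoint `ζ_i` of the interval component of `θ` in `P`. -/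
def compSup (P : Set ℝ) (θ : ℝ) : ℝ := sSup (connectedComponentIn P θ)

/-- The posterior-mean map induced by the pooling set `P`: states in a pooled
interval are mapped to the conditional mean of that interval, other states to
themselves. -/
def poolMean (f : ℝ → ℝ) (P : Set ℝ) (θ : ℝ) : ℝ :=
  if θ ∈ P then condMean f (compInf P θ) (compSup P θ) else θ

/-- The induced distribution `G_P` of posterior means. -/
def Gp (f : ℝ → ℝ) (P : Set ℝ) (θ : ℝ) : ℝ :=
  if θ ∈ P then
    (if θ < condMean f (compInf P θ) (compSup P θ) then cdfF f (compInf P θ)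
     else cdfF f (compSup P θ))
  else cdfF f θ

/-- `Γ_P(θ) = ∫_0^θ G_P(t) dt`. -/
def Gam (f : ℝ → ℝ) (P : Set ℝ) (θ : ℝ) : ℝ := ∫ t in (0:ℝ)..θ, Gp f P t

/-- The value `∫_0^1 u(θ) dG_P(θ)` of the pooling set `P` under payoff `u`,
written as the expectation of `u` composed with the posterior-mean map. -/
def poolValue (f : ℝ → ℝ) (u : ℝ → ℝ) (P : Set ℝ) : ℝ :=
  ∫ θ in (0:ℝ)..1, u (poolMean f P θ) * f θ

/-- `P` is an optimal pooling set for `u`. -/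
def IsOptimal (f : ℝ → ℝ) (u : ℝ → ℝ) (P : Set ℝ) : Prop :=
  IsPoolingSet P ∧ ∀ Q : Set ℝ, IsPoolingSet Q → poolValue f u Q ≤ poolValue f u P

/-- Receiver's preferred decision in the quadratic setup. -/
def rhoR (a b θ : ℝ) : ℝ := a * θ + b

/-- Second-best decision in the quadratic setup with leeway `ℓ`. -/
def rhoStar (a b ℓ θ : ℝ) : ℝ :=
  if ℓ < θ - rhoR a b θ then rhoR a b θ + ℓ
  else if θ - rhoR a b θ < -ℓ then rhoR a b θ - ℓ
  else θ

/-- Joint payoff under the second-best decision in the quadratic setup. -/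
def uStar (a b ℓ θ : ℝ) : ℝ := θ * rhoStar a b ℓ θ - (rhoStar a b ℓ θ) ^ 2 / 2

/-!
With `d = θ - ρ_R(θ)`, which is affine in `θ`, the extra leeway is worth
`u_*^ℓ - u_*^ℓ̂ = ((|d| - ℓ̂)₊² - (|d| - ℓ)₊²) / 2`. Up to the factor `1 / 2` this is the maximum
over `s ∈ [0, ℓ - ℓ̂]` of `2 s (|d| - ℓ̂) - s²`, hence convex in `θ`. Posterior means have the same
expectation under every pooling set, so by Jensen's inequality complete pooling earns the least,
among all pooling sets, from the convex payoff `u_*^ℓ - u_*^ℓ̂`. Subtracting it from `u_*^ℓ`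
therefore preserves the optimality of complete pooling.
-/

section General

lemma convexOn_of_isLUB {ι E : Type*} [AddCommMonoid E] [Module ℝ E] {s : Set E} {f : ι → E → ℝ}
    {g : E → ℝ} (hs : Convex ℝ s) (hf : ∀ i, ConvexOn ℝ s (f i))
    (hg : ∀ x ∈ s, IsLUB (range fun i => f i x) (g x)) : ConvexOn ℝ s g := by
  refine ⟨hs, fun x hx y hy α β hα hβ hαβ => (hg _ (hs hx hy hα hβ hαβ)).2 ?_⟩
  rintro _ ⟨i, rfl⟩
  have hfx : f i x ≤ g x := (hg x hx).1 (mem_range_self i)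
  have hfy : f i y ≤ g y := (hg y hy).1 (mem_range_self i)
  exact ((hf i).2 hx hy hα hβ hαβ).trans (by gcongr)

lemma setIntegral_sUnion_congr {α E : Type*} [MeasurableSpace α] [NormedAddCommGroup E]
    [NormedSpace ℝ E] {μ : Measure α} {S : Set (Set α)}
    (hS : S.Countable) (hmeas : ∀ s ∈ S, MeasurableSet s) (hdisj : S.PairwiseDisjoint id)
    {g h : α → E} (hg : IntegrableOn g (⋃₀ S) μ) (hh : IntegrableOn h (⋃₀ S) μ)
    (hgh : ∀ s ∈ S, ∫ x in s, g x ∂μ = ∫ x in s, h x ∂μ) :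
    ∫ x in ⋃₀ S, g x ∂μ = ∫ x in ⋃₀ S, h x ∂μ := by
  have := hS.to_subtype
  rw [sUnion_eq_iUnion] at hg hh ⊢
  have hmeas' : ∀ s : S, MeasurableSet (s : Set α) := fun s => hmeas s s.2
  have hdisj' : Pairwise (Function.onFun Disjoint fun s : S => (s : Set α)) :=
    (pairwise_subtype_iff_pairwise_set S _).2 hdisj
  rw [integral_iUnion hmeas' hdisj' hg, integral_iUnion hmeas' hdisj' hh]
  exact tsum_congr fun s => hgh s s.2

lemma ae_eq_Icc_csInf_csSup_of_isConnected {s : Set ℝ} (hs : IsConnected s) (hb : BddBelow s)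
    (ha : BddAbove s) : s =ᵐ[volume] Icc (sInf s) (sSup s) :=
  (subset_Icc_csInf_csSup hb ha).eventuallyLE.antisymm
    (Ioo_ae_eq_Icc.symm.le.trans (hs.Ioo_csInf_csSup_subset hb ha).eventuallyLE)

lemma integrable_comp_of_ae_mem_isCompact {α E F : Type*} [MeasurableSpace α]
    [TopologicalSpace E] [NormedAddCommGroup F] {μ : Measure α} [IsFiniteMeasure μ] {K : Set E}
    (hK : IsCompact K) {u : E → F} (hu : Continuous u) {m : α → E} (hm : AEStronglyMeasurable m μ)
    (hmem : ∀ᵐ x ∂μ, m x ∈ K) : Integrable (fun x => u (m x)) μ := by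
  obtain ⟨C, hC⟩ := hK.exists_bound_of_continuousOn hu.continuousOn
  exact .of_bound (hu.comp_aestronglyMeasurable hm) C (hmem.mono fun x hx => hC _ hx)

end General

section Prior

/-- The prior distribution of the state: the measure on `[0,1]` with density `f`. -/
def prior (f : ℝ → ℝ) : Measure ℝ :=
  (volume.restrict (Icc 0 1)).withDensity fun θ => ENNReal.ofReal (f θ)

lemma prior_absolutelyContinuous_volume (f : ℝ → ℝ) : prior f ≪ volume :=
  (withDensity_absolutelyContinuous _ _).trans Measure.absolutelyContinuous_restrict

lemma ae_prior_mem_Icc (f : ℝ → ℝ) : ∀ᵐ θ ∂prior f, θ ∈ Icc (0 : ℝ) 1 :=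
  (withDensity_absolutelyContinuous _ _).ae_le (ae_restrict_mem measurableSet_Icc)

lemma prior_restrict_Icc (f : ℝ → ℝ) : (prior f).restrict (Icc 0 1) = prior f :=
  Measure.restrict_eq_self_of_ae_mem (ae_prior_mem_Icc f)

variable {f : ℝ → ℝ}

lemma volume_restrict_Icc_absolutelyContinuous_prior (hf : IsDensity f) :
    volume.restrict (Icc 0 1) ≪ prior f := by
  refine withDensity_absolutelyContinuous' hf.2.1.aemeasurable.ennreal_ofReal ?_
  filter_upwards [ae_restrict_mem measurableSet_Icc] with θ hθ
  exact (ENNReal.ofReal_pos.2 (hf.1 θ hθ)).ne'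

lemma isProbabilityMeasure_prior (hf : IsDensity f) : IsProbabilityMeasure (prior f) := by
  have hnonneg : 0 ≤ᵐ[volume.restrict (Icc 0 1)] f := by
    filter_upwards [ae_restrict_mem measurableSet_Icc] with θ hθ using (hf.1 θ hθ).le
  refine ⟨?_⟩
  rw [prior, withDensity_apply _ .univ, Measure.restrict_univ,
    ← ofReal_integral_eq_lintegral_ofReal hf.2.1 hnonneg, integral_Icc_eq_integral_Ioc,
    ← intervalIntegral.integral_of_le zero_le_one, hf.2.2, ENNReal.ofReal_one]

lemma setIntegral_prior_Icc (hf : IsDensity f) {p q : ℝ} (hp : 0 ≤ p) (hpq : p ≤ q) (hq : q ≤ 1)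
    (g : ℝ → ℝ) : ∫ θ in Icc p q, g θ ∂prior f = ∫ θ in p..q, g θ * f θ := by
  have hsub : Icc p q ⊆ Icc 0 1 := Icc_subset_Icc hp hq
  rw [prior, restrict_withDensity measurableSet_Icc, Measure.restrict_restrict_of_subset hsub,
    integral_withDensity_eq_integral_toReal_smul₀
      (hf.2.1.mono_set hsub).aemeasurable.ennreal_ofReal
      (ae_of_all _ fun _ => ENNReal.ofReal_lt_top),
    intervalIntegral.integral_of_le hpq, ← integral_Icc_eq_integral_Ioc]
  refine setIntegral_congr_fun measurableSet_Icc fun θ hθ => ?_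
  simp only [ENNReal.toReal_ofReal (hf.1 θ (hsub hθ)).le, smul_eq_mul, mul_comm]

lemma condMean_eq_setAverage (hf : IsDensity f) {p q : ℝ} (hp : 0 ≤ p) (hpq : p ≤ q)
    (hq : q ≤ 1) : condMean f p q = ⨍ θ in Icc p q, θ ∂prior f := by
  have hmass : (prior f).real (Icc p q) = ∫ θ in p..q, f θ := by
    simpa using setIntegral_prior_Icc hf hp hpq hq fun _ => 1
  rw [setAverage_eq, hmass, setIntegral_prior_Icc hf hp hpq hq, smul_eq_mul, condMean,
    inv_mul_eq_div]

lemma integrable_id_prior (hf : IsDensity f) : Integrable (fun θ => θ) (prior f) :=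
  have := isProbabilityMeasure_prior hf
  integrable_comp_of_ae_mem_isCompact isCompact_Icc continuous_id' aestronglyMeasurable_id
    (ae_prior_mem_Icc f)

end Prior

section PoolingSet

/-- The family of connected components of `P`; for a pooling set these are the pooling intervals. -/
def components (P : Set ℝ) : Set (Set ℝ) := connectedComponentIn P '' P

lemma sUnion_components (P : Set ℝ) : ⋃₀ components P = P := by
  refine subset_antisymm (sUnion_subset ?_) fun θ hθ =>
    ⟨_, mem_image_of_mem _ hθ, mem_connectedComponentIn hθ⟩
  rintro _ ⟨θ, -, rfl⟩
  exact connectedComponentIn_subset P θ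

lemma pairwiseDisjoint_components (P : Set ℝ) : (components P).PairwiseDisjoint id := by
  rintro _ ⟨x, -, rfl⟩ _ ⟨y, -, rfl⟩ hne
  refine Set.disjoint_left.2 fun z hzx hzy => hne ?_
  exact (connectedComponentIn_eq hzx).trans (connectedComponentIn_eq hzy).symm

lemma measurableSet_of_mem_components {P C : Set ℝ} (hC : C ∈ components P) : MeasurableSet C := by
  obtain ⟨θ, -, rfl⟩ := hC
  exact isPreconnected_connectedComponentIn.ordConnected.measurableSet

lemma isPoolingSet_Icc : IsPoolingSet (Icc 0 1) := ⟨univ, isOpen_univ, (univ_inter _).symm⟩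

namespace IsPoolingSet

variable {P : Set ℝ}

lemma subset_Icc (hP : IsPoolingSet P) : P ⊆ Icc 0 1 := by
  obtain ⟨U, -, rfl⟩ := hP
  exact inter_subset_right

lemma measurableSet (hP : IsPoolingSet P) : MeasurableSet P := by
  obtain ⟨U, hU, rfl⟩ := hP
  exact hU.measurableSet.inter measurableSet_Icc

lemma nonempty_interior_connectedComponentIn (hP : IsPoolingSet P) {θ : ℝ} (hθ : θ ∈ P) :
    (interior (connectedComponentIn P θ)).Nonempty := by
  obtain ⟨U, hU, rfl⟩ := hP
  have hV : IsOpen (connectedComponentIn U θ) := hU.connectedComponentIn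
  have hθV : θ ∈ connectedComponentIn U θ := mem_connectedComponentIn hθ.1
  have hsub : connectedComponentIn U θ ∩ Icc 0 1 ⊆ connectedComponentIn (U ∩ Icc 0 1) θ :=
    (isPreconnected_connectedComponentIn.ordConnected.inter
      ordConnected_Icc).isPreconnected.subset_connectedComponentIn ⟨hθV, hθ.2⟩
      (inter_subset_inter_left _ (connectedComponentIn_subset U θ))
  have hclosure : θ ∈ closure (Ioo (0 : ℝ) 1) := by
    rw [closure_Ioo zero_ne_one]
    exact hθ.2
  exact (mem_closure_iff.1 hclosure _ hV hθV).mono <| interior_maximal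
    ((inter_subset_inter_right _ Ioo_subset_Icc_self).trans hsub) (hV.inter isOpen_Ioo)

lemma countable_components (hP : IsPoolingSet P) : (components P).Countable := by
  refine (pairwiseDisjoint_components P).countable_of_nonempty_interior ?_
  rintro _ ⟨θ, hθ, rfl⟩
  exact hP.nonempty_interior_connectedComponentIn hθ

lemma prior_connectedComponentIn_ne_zero (hP : IsPoolingSet P) {f : ℝ → ℝ} (hf : IsDensity f)
    {θ : ℝ} (hθ : θ ∈ P) : prior f (connectedComponentIn P θ) ≠ 0 := by
  intro hzero
  have hvol := volume_restrict_Icc_absolutelyContinuous_prior hf hzero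
  rw [Measure.restrict_eq_self _ ((connectedComponentIn_subset P θ).trans hP.subset_Icc)] at hvol
  exact (isOpen_interior.measure_pos volume (hP.nonempty_interior_connectedComponentIn hθ)).ne'
    (measure_mono_null interior_subset hvol)

end IsPoolingSet

end PoolingSet

section PosteriorMean

variable {f : ℝ → ℝ} {P : Set ℝ}

lemma poolMean_of_notMem (f : ℝ → ℝ) {θ : ℝ} (hθ : θ ∉ P) : poolMean f P θ = θ := if_neg hθ

lemma poolMean_eq_setAverage (hf : IsDensity f) (hP : IsPoolingSet P) {θ : ℝ} (hθ : θ ∈ P) :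
    poolMean f P θ = ⨍ t in connectedComponentIn P θ, t ∂prior f := by
  have hsub : connectedComponentIn P θ ⊆ Icc 0 1 :=
    (connectedComponentIn_subset P θ).trans hP.subset_Icc
  have hconn : IsConnected (connectedComponentIn P θ) := isConnected_connectedComponentIn_iff.2 hθ
  have hb : BddBelow (connectedComponentIn P θ) := bddBelow_Icc.mono hsub
  have ha : BddAbove (connectedComponentIn P θ) := bddAbove_Icc.mono hsub
  rw [poolMean, if_pos hθ, compInf, compSup,
    condMean_eq_setAverage hf (le_csInf hconn.nonempty fun t ht => (hsub ht).1)
      (csInf_le_csSup hconn.nonempty hb ha) (csSup_le hconn.nonempty fun t ht => (hsub ht).2)]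
  exact setAverage_congr <| (prior_absolutelyContinuous_volume f).ae_eq
    (ae_eq_Icc_csInf_csSup_of_isConnected hconn hb ha).symm

lemma poolMean_Icc (hf : IsDensity f) {θ : ℝ} (hθ : θ ∈ Icc (0 : ℝ) 1) :
    poolMean f (Icc 0 1) θ = ∫ t, t ∂prior f := by
  have := isProbabilityMeasure_prior hf
  rw [poolMean_eq_setAverage hf isPoolingSet_Icc hθ, isPreconnected_Icc.connectedComponentIn hθ,
    prior_restrict_Icc, average_eq_integral]

lemma poolMean_mem_Icc (hf : IsDensity f) (hP : IsPoolingSet P) {θ : ℝ} (hθ : θ ∈ Icc (0 : ℝ) 1) :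
    poolMean f P θ ∈ Icc (0 : ℝ) 1 := by
  have := isProbabilityMeasure_prior hf
  by_cases hθP : θ ∈ P
  · rw [poolMean_eq_setAverage hf hP hθP]
    exact (convex_Icc 0 1).set_average_mem isClosed_Icc
      (hP.prior_connectedComponentIn_ne_zero hf hθP) (measure_ne_top _ _)
      (ae_restrict_of_ae (ae_prior_mem_Icc f))
      (integrable_id_prior hf).integrableOn
  · rwa [poolMean_of_notMem f hθP]

lemma poolMean_eq_of_mem_connectedComponentIn (f : ℝ → ℝ) {θ t : ℝ}
    (ht : t ∈ connectedComponentIn P θ) : poolMean f P t = poolMean f P θ := by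
  have hθ : θ ∈ P := connectedComponentIn_nonempty_iff.1 ⟨t, ht⟩
  rw [poolMean, poolMean, if_pos (connectedComponentIn_subset P θ ht), if_pos hθ]
  simp only [compInf, compSup, connectedComponentIn_eq ht]

lemma aestronglyMeasurable_poolMean (f : ℝ → ℝ) (hP : IsPoolingSet P) (μ : Measure ℝ) :
    AEStronglyMeasurable (poolMean f P) μ := by
  have := hP.countable_components.to_subtype
  have hpooled : AEStronglyMeasurable (poolMean f P) (μ.restrict (⋃₀ components P)) := by
    rw [sUnion_eq_iUnion, aestronglyMeasurable_iUnion_iff]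
    rintro ⟨C, hC⟩
    have hCmeas := measurableSet_of_mem_components hC
    obtain ⟨θ, -, rfl⟩ := hC
    exact aestronglyMeasurable_const.congr <| (ae_restrict_iff' hCmeas).2 <| ae_of_all _ fun t ht =>
      (poolMean_eq_of_mem_connectedComponentIn f ht).symm
  have hseparated : AEStronglyMeasurable (poolMean f P) (μ.restrict Pᶜ) :=
    aestronglyMeasurable_id.congr <| (ae_restrict_iff' hP.measurableSet.compl).2 <|
      ae_of_all _ fun t ht => (poolMean_of_notMem f ht).symm
  rw [sUnion_components] at hpooled
  rw [← Measure.restrict_univ (μ := μ), ← union_compl_self P]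
  exact aestronglyMeasurable_union_iff.2 ⟨hpooled, hseparated⟩

lemma integrable_comp_poolMean (hf : IsDensity f) (hP : IsPoolingSet P) {u : ℝ → ℝ}
    (hu : Continuous u) : Integrable (fun θ => u (poolMean f P θ)) (prior f) :=
  have := isProbabilityMeasure_prior hf
  integrable_comp_of_ae_mem_isCompact isCompact_Icc hu (aestronglyMeasurable_poolMean f hP _)
    ((ae_prior_mem_Icc f).mono fun _ hθ => poolMean_mem_Icc hf hP hθ)

lemma integrable_poolMean (hf : IsDensity f) (hP : IsPoolingSet P) :
    Integrable (poolMean f P) (prior f) :=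
  integrable_comp_poolMean (u := fun m => m) hf hP continuous_id'

lemma integral_poolMean (hf : IsDensity f) (hP : IsPoolingSet P) :
    ∫ θ, poolMean f P θ ∂prior f = ∫ θ, θ ∂prior f := by
  have := isProbabilityMeasure_prior hf
  have hmean := integrable_poolMean hf hP
  have hid := integrable_id_prior hf
  have hpooled : ∫ θ in ⋃₀ components P, poolMean f P θ ∂prior f =
      ∫ θ in ⋃₀ components P, θ ∂prior f := by
    refine setIntegral_sUnion_congr hP.countable_components
      (fun _ => measurableSet_of_mem_components) (pairwiseDisjoint_components P)
      hmean.integrableOn hid.integrableOn fun C hC => ?_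
    have hCmeas := measurableSet_of_mem_components hC
    obtain ⟨θ, hθ, rfl⟩ := hC
    rw [setIntegral_congr_fun hCmeas fun t => poolMean_eq_of_mem_connectedComponentIn f,
      poolMean_eq_setAverage hf hP hθ, setIntegral_setAverage]
  have hseparated : ∫ θ in Pᶜ, poolMean f P θ ∂prior f = ∫ θ in Pᶜ, θ ∂prior f :=
    setIntegral_congr_fun hP.measurableSet.compl fun t => poolMean_of_notMem f
  rw [sUnion_components] at hpooled
  rw [← integral_add_compl hP.measurableSet hmean, ← integral_add_compl hP.measurableSet hid,
    hpooled, hseparated]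

end PosteriorMean

section PoolValue

variable {f : ℝ → ℝ}

lemma poolValue_eq_integral_prior (hf : IsDensity f) (u : ℝ → ℝ) (P : Set ℝ) :
    poolValue f u P = ∫ θ, u (poolMean f P θ) ∂prior f := by
  rw [poolValue, ← setIntegral_prior_Icc hf le_rfl zero_le_one le_rfl fun θ => u (poolMean f P θ),
    prior_restrict_Icc]

lemma poolValue_Icc (hf : IsDensity f) (u : ℝ → ℝ) :
    poolValue f u (Icc 0 1) = u (∫ θ, θ ∂prior f) := by
  have := isProbabilityMeasure_prior hf
  have hconst : ∀ᵐ θ ∂prior f, u (poolMean f (Icc 0 1) θ) = u (∫ t, t ∂prior f) :=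
    (ae_prior_mem_Icc f).mono fun θ hθ => congrArg u (poolMean_Icc hf hθ)
  rw [poolValue_eq_integral_prior hf, integral_congr_ae hconst, integral_const, probReal_univ,
    one_smul]

lemma poolValue_Icc_le_of_convexOn (hf : IsDensity f) {u : ℝ → ℝ} (hu : Continuous u)
    (hconv : ConvexOn ℝ (Icc 0 1) u) {P : Set ℝ} (hP : IsPoolingSet P) :
    poolValue f u (Icc 0 1) ≤ poolValue f u P := by
  have := isProbabilityMeasure_prior hf
  rw [poolValue_Icc hf, poolValue_eq_integral_prior hf, ← integral_poolMean hf hP]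
  exact hconv.map_integral_le hu.continuousOn isClosed_Icc
    ((ae_prior_mem_Icc f).mono fun _ hθ => poolMean_mem_Icc hf hP hθ)
    (integrable_poolMean hf hP) (integrable_comp_poolMean hf hP hu)

lemma poolValue_sub (hf : IsDensity f) {u v : ℝ → ℝ} (hu : Continuous u) (hv : Continuous v)
    {P : Set ℝ} (hP : IsPoolingSet P) :
    poolValue f (u - v) P = poolValue f u P - poolValue f v P := by
  simp only [poolValue_eq_integral_prior hf, Pi.sub_apply]
  exact integral_sub (integrable_comp_poolMean hf hP hu) (integrable_comp_poolMean hf hP hv)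

lemma isOptimal_Icc_of_convexOn_sub (hf : IsDensity f) {u v : ℝ → ℝ} (hu : Continuous u)
    (hv : Continuous v) (hconv : ConvexOn ℝ (Icc 0 1) (u - v)) (hopt : IsOptimal f u (Icc 0 1)) :
    IsOptimal f v (Icc 0 1) := by
  refine ⟨isPoolingSet_Icc, fun Q hQ => ?_⟩
  have hjensen := poolValue_Icc_le_of_convexOn hf (hu.sub hv) hconv hQ
  rw [poolValue_sub hf hu hv hQ, poolValue_sub hf hu hv isPoolingSet_Icc] at hjensen
  linarith [hopt.2 Q hQ]

end PoolValue

section QuadraticPayoff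

lemma abs_sub_rhoStar (a b : ℝ) {ℓ : ℝ} (hℓ : 0 ≤ ℓ) (θ : ℝ) :
    |θ - rhoStar a b ℓ θ| = max (|θ - rhoR a b θ| - ℓ) 0 := by
  unfold rhoStar
  split_ifs with hhigh hlow
  · rw [abs_of_pos (by linarith : 0 < θ - rhoR a b θ), abs_of_pos (by linarith),
      max_eq_left (by linarith)]
    ring
  · rw [abs_of_neg (by linarith : θ - rhoR a b θ < 0), abs_of_neg (by linarith),
      max_eq_left (by linarith)]
    ring
  · have habs : |θ - rhoR a b θ| ≤ ℓ := abs_le.2 ⟨by linarith, by linarith⟩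
    rw [sub_self, abs_zero, max_eq_right (by linarith)]

lemma uStar_eq (a b : ℝ) {ℓ : ℝ} (hℓ : 0 ≤ ℓ) (θ : ℝ) :
    uStar a b ℓ θ = (θ ^ 2 - max (|θ - rhoR a b θ| - ℓ) 0 ^ 2) / 2 := by
  rw [← abs_sub_rhoStar a b hℓ, sq_abs, uStar]
  ring

lemma continuous_uStar (a b : ℝ) {ℓ : ℝ} (hℓ : 0 ≤ ℓ) : Continuous (uStar a b ℓ) := by
  simp only [funext (uStar_eq a b hℓ), rhoR]
  fun_prop

lemma isGreatest_sq_max_sub_sq_max {p q : ℝ} (hpq : p ≤ q) (t : ℝ) :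
    IsGreatest (range fun s : Icc 0 (q - p) => 2 * s * (t - p) - (s : ℝ) ^ 2)
      (max (t - p) 0 ^ 2 - max (t - q) 0 ^ 2) := by
  constructor
  · refine ⟨projIcc 0 (q - p) (sub_nonneg.2 hpq) (t - p), ?_⟩
    rcases le_total t p with htp | hpt
    · rw [projIcc_of_le_left _ (by linarith), max_eq_right (by linarith),
        max_eq_right (by linarith)]
      ring
    rcases le_total t q with htq | hqt
    · rw [projIcc_of_mem _ ⟨by linarith, by linarith⟩, max_eq_left (by linarith),
        max_eq_right (by linarith)]
      ring
    · rw [projIcc_of_right_le _ (by linarith), max_eq_left (by linarith),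
        max_eq_left (by linarith)]
      ring
  · rintro _ ⟨⟨s, hs0, hsq⟩, rfl⟩
    dsimp only
    rcases le_total t q with htq | hqt
    · have hamgm := two_mul_le_add_sq s (max (t - p) 0)
      have hmono : s * (t - p) ≤ s * max (t - p) 0 :=
        mul_le_mul_of_nonneg_left (le_max_left _ _) hs0
      rw [max_eq_right (sub_nonpos.2 htq)]
      linarith
    · have hsq' : (t - q) ^ 2 ≤ (t - p - s) ^ 2 :=
        pow_le_pow_left₀ (sub_nonneg.2 hqt) (by linarith) 2
      rw [max_eq_left (sub_nonneg.2 (hpq.trans hqt)), max_eq_left (sub_nonneg.2 hqt)]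
      linarith

lemma convexOn_uStar_sub_uStar (a b : ℝ) {ℓ ℓh : ℝ} (hℓh : 0 ≤ ℓh) (hle : ℓh ≤ ℓ) :
    ConvexOn ℝ univ (uStar a b ℓ - uStar a b ℓh) := by
  have hconflict : ConvexOn ℝ univ fun θ => |θ - rhoR a b θ| := by
    refine ((convexOn_dist b convex_univ).comp_linearMap ((1 - a) • LinearMap.id)).congr
      fun θ _ => ?_
    simp only [Function.comp_apply, LinearMap.smul_apply, LinearMap.id_apply, smul_eq_mul,
      Real.dist_eq, rhoR]
    ring_nf
  have hsup : ConvexOn ℝ univ fun θ =>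
      max (|θ - rhoR a b θ| - ℓh) 0 ^ 2 - max (|θ - rhoR a b θ| - ℓ) 0 ^ 2 := by
    refine convexOn_of_isLUB (f := fun (s : Icc 0 (ℓ - ℓh)) θ =>
      2 * s * (|θ - rhoR a b θ| - ℓh) - (s : ℝ) ^ 2) convex_univ (fun s => ?_) fun θ _ =>
        (isGreatest_sq_max_sub_sq_max hle |θ - rhoR a b θ|).isLUB
    exact ((hconflict.add_const (-ℓh)).smul (mul_nonneg zero_le_two s.2.1)).add_const (-(s : ℝ) ^ 2)
  refine (hsup.smul (by norm_num : (0 : ℝ) ≤ 1 / 2)).congr fun θ _ => ?_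
  simp only [Pi.sub_apply, uStar_eq a b hℓh, uStar_eq a b (hℓh.trans hle), smul_eq_mul]
  ring

end QuadraticPayoff

theorem complete_pooling_monotone_in_leeway_general (a b : ℝ) {ℓ ℓh : ℝ} (hℓh : 0 ≤ ℓh)
    (hle : ℓh ≤ ℓ) {f : ℝ → ℝ} (hf : IsDensity f)
    (hopt : IsOptimal f (uStar a b ℓ) (Icc (0 : ℝ) 1)) :
    IsOptimal f (uStar a b ℓh) (Icc (0 : ℝ) 1) :=
  isOptimal_Icc_of_convexOn_sub hf (continuous_uStar a b (hℓh.trans hle))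
    (continuous_uStar a b hℓh)
    ((convexOn_uStar_sub_uStar a b hℓh hle).subset (subset_univ _) (convex_Icc 0 1)) hopt

/-- in the quadratic setup with a highly responsive receiver
(`a > 2`), if complete pooling `[0,1]` is optimal for the payoff `u_*` with
leeway `ℓ`, then complete pooling is optimal for the payoff with any smaller
leeway `0 < ℓ̂ ≤ ℓ`. -/
theorem complete_pooling_monotone_in_leeway (a b : ℝ) (ha : 2 < a)
    (ℓ ℓh : ℝ) (hℓh : 0 < ℓh) (hle : ℓh ≤ ℓ)
    (f : ℝ → ℝ) (hf : IsDensity f)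
    (hopt : IsOptimal f (uStar a b ℓ) (Icc (0:ℝ) 1)) :
    IsOptimal f (uStar a b ℓh) (Icc (0:ℝ) 1) :=
  complete_pooling_monotone_in_leeway_general a b hℓh.le hle hf hopt
end
end
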